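/- Let μ > 0, λ + μ > 0, a > 0, and γ > 1 be real constants. Suppose (ρ, v) is a smooth solution on ℝ² of the stationary compressible Navier–Stokes system: div(ρv) = 0, div(ρ v⊗v) = -∇p + μΔv + (μ+λ)∇(div v), with p = aρ^γ and ρ ≥ 0. If ρ ∈ L^∞(ℝ²) and v ∈ H¹(ℝ²) (i.e. v ∈ L²(ℝ²) and ∇v ∈ L²(ℝ²)), then v = 0 identically and ρ is a constant function on ℝ². -/

import Mathlib

open MeasureTheory Real Filter

noncomputable section

/-- Partial derivative `∂ⱼ f (x)` of a scalar function on `ℝ²`. -/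
def pd (f : EuclideanSpace ℝ (Fin 2) → ℝ) (j : Fin 2)
    (x : EuclideanSpace ℝ (Fin 2)) : ℝ :=
  fderiv ℝ f x (EuclideanSpace.single j 1)

/-- Divergence of a vector field on `ℝ²`. -/
def divV (v : EuclideanSpace ℝ (Fin 2) → EuclideanSpace ℝ (Fin 2))
    (x : EuclideanSpace ℝ (Fin 2)) : ℝ :=
  ∑ j, pd (fun y => v y j) j x

/-- Laplacian of a scalar function on `ℝ²`. -/
def lap (f : EuclideanSpace ℝ (Fin 2) → ℝ)
    (x : EuclideanSpace ℝ (Fin 2)) : ℝ :=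
  ∑ j, pd (pd f j) j x

abbrev E2 := EuclideanSpace ℝ (Fin 2)

lemma pd_add' {f g : E2 → ℝ} {j : Fin 2} {x : E2} (hf : DifferentiableAt ℝ f x)
    (hg : DifferentiableAt ℝ g x) : pd (fun y => f y + g y) j x = pd f j x + pd g j x := by
  unfold pd; rw [fderiv_fun_add hf hg]; rfl

lemma pd_sub' {f g : E2 → ℝ} {j : Fin 2} {x : E2} (hf : DifferentiableAt ℝ f x)
    (hg : DifferentiableAt ℝ g x) : pd (fun y => f y - g y) j x = pd f j x - pd g j x := by
  unfold pd; rw [fderiv_fun_sub hf hg]; rfl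

lemma pd_mul' {f g : E2 → ℝ} {j : Fin 2} {x : E2} (hf : DifferentiableAt ℝ f x)
    (hg : DifferentiableAt ℝ g x) :
    pd (fun y => f y * g y) j x = pd f j x * g x + f x * pd g j x := by
  unfold pd; rw [fderiv_fun_mul hf hg]; simp; ring

lemma pd_cmul {g : E2 → ℝ} {j : Fin 2} {x : E2} (c : ℝ)
    (hg : DifferentiableAt ℝ g x) :
    pd (fun y => c * g y) j x = c * pd g j x := by
  unfold pd; rw [fderiv_const_mul hg]; simp

lemma pd_rpow {g : E2 → ℝ} {j : Fin 2} {x : E2} {p : ℝ} (hp : 1 ≤ p)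
    (hg : DifferentiableAt ℝ g x) :
    pd (fun y => g y ^ p) j x = p * g x ^ (p - 1) * pd g j x := by
  unfold pd; rw [(hg.hasFDerivAt.rpow_const (Or.inr hp)).fderiv]; simp

lemma pd_contDiff {f : E2 → ℝ} (hf : ContDiff ℝ (⊤ : ℕ∞) f) (j : Fin 2) :
    ContDiff ℝ (⊤ : ℕ∞) (pd f j) := by
  have : ContDiff ℝ (⊤ : ℕ∞) (fderiv ℝ f) := hf.fderiv_right (by simp)
  exact this.clm_apply contDiff_const

lemma pd_continuous {f : E2 → ℝ} (hf : ContDiff ℝ 1 f) (j : Fin 2) :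
    Continuous (pd f j) := by
  have : Continuous (fderiv ℝ f) := hf.continuous_fderiv (by simp)
  exact this.clm_apply continuous_const

lemma fderiv_apply_eq (f : E2 → ℝ) (x h : E2) :
    fderiv ℝ f x h = h 0 * pd f 0 x + h 1 * pd f 1 x := by
  have : h = h 0 • EuclideanSpace.single 0 (1:ℝ) + h 1 • EuclideanSpace.single 1 (1:ℝ) := by
    ext i; fin_cases i <;> simp
  conv_lhs => rw [this]
  simp [pd]

lemma fderiv_norm_le (f : E2 → ℝ) (x : E2) : ‖fderiv ℝ f x‖ ≤ |pd f 0 x| + |pd f 1 x| := by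
  refine ContinuousLinearMap.opNorm_le_bound _ (by positivity) fun h => ?_
  rw [fderiv_apply_eq, Real.norm_eq_abs]
  have h0 : |h 0| ≤ ‖h‖ := PiLp.norm_apply_le h 0
  have h1 : |h 1| ≤ ‖h‖ := PiLp.norm_apply_le h 1
  calc |h 0 * pd f 0 x + h 1 * pd f 1 x| ≤ |h 0| * |pd f 0 x| + |h 1| * |pd f 1 x| := by
        rw [← abs_mul, ← abs_mul]; exact abs_add_le _ _
    _ ≤ ‖h‖ * |pd f 0 x| + ‖h‖ * |pd f 1 x| := by gcongr
    _ = _ := by ring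

lemma exists_cutoff : ∃ (φ : ℕ → E2 → ℝ) (K : ℝ), 0 ≤ K ∧
    (∀ n, ContDiff ℝ (⊤ : ℕ∞) (φ n)) ∧ (∀ n, HasCompactSupport (φ n)) ∧
    (∀ n x, 0 ≤ φ n x) ∧ (∀ n x, φ n x ≤ 1) ∧
    (∀ (n : ℕ) x, ‖x‖ < n + 1 → φ n x = 1) ∧
    (∀ (n : ℕ) j x, |pd (φ n) j x| ≤ K / (n + 1)) ∧
    (∀ (n : ℕ) j x, ‖x‖ < n + 1 → pd (φ n) j x = 0) ∧
    (∀ (n : ℕ) j x, 2 * (n + 1) < ‖x‖ → pd (φ n) j x = 0) := by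
  let b : ContDiffBump (0 : E2) := ⟨1, 2, one_pos, one_lt_two⟩
  have hb : ContDiff ℝ (⊤ : ℕ∞) b := b.contDiff
  obtain ⟨K, hK⟩ := (hb.continuous_fderiv (by simp)).bounded_above_of_compact_support
    (b.hasCompactSupport.fderiv ℝ)
  have key : ∀ (n : ℕ) (j : Fin 2) (x : E2), pd (fun x => b ((n + 1 : ℝ)⁻¹ • x)) j x
      = (n + 1 : ℝ)⁻¹ * pd b j ((n + 1 : ℝ)⁻¹ • x) := by
    intro n j x
    have h1 : HasFDerivAt (fun x : E2 => (n + 1 : ℝ)⁻¹ • x)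
      ((n + 1 : ℝ)⁻¹ • ContinuousLinearMap.id ℝ E2) x :=
      (hasFDerivAt_id (𝕜 := ℝ) x).const_smul ((n + 1 : ℝ)⁻¹)
    have h2 := ((hb.differentiable (by simp)) ((n + 1 : ℝ)⁻¹ • x)).hasFDerivAt.comp x h1
    have h3 := h2.fderiv
    unfold pd
    change fderiv ℝ (⇑b ∘ fun x => (n + 1 : ℝ)⁻¹ • x) x _ = _
    rw [h3]; simp
  have hnorm : ∀ (n : ℕ) (x : E2), ‖(n + 1 : ℝ)⁻¹ • x‖ = ‖x‖ / (n + 1) := by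
    intro n x
    rw [norm_smul, norm_inv, Real.norm_of_nonneg (by positivity)]; field_simp
  have hlt : ∀ (n : ℕ) (x : E2), ‖x‖ < n + 1 → (n + 1 : ℝ)⁻¹ • x ∈ Metric.ball (0 : E2) 1 := by
    intro n x hx
    rw [mem_ball_zero_iff, hnorm, div_lt_one (by positivity)]; exact hx
  have hKn : 0 ≤ K := (norm_nonneg _).trans (hK 0)
  refine ⟨fun n x => b ((n + 1 : ℝ)⁻¹ • x), K, hKn, ?_, ?_, ?_, ?_, ?_, ?_, ?_, ?_⟩
  · intro n; exact hb.comp (contDiff_const_smul _)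
  · intro n
    exact b.hasCompactSupport.comp_homeomorph (Homeomorph.smulOfNeZero ((n + 1 : ℝ)⁻¹) (by positivity))
  · intro n x; exact b.nonneg
  · intro n x; exact b.le_one
  · intro n x hx
    exact b.one_of_mem_closedBall (Metric.ball_subset_closedBall (hlt n x hx))
  · intro n j x
    rw [key, abs_mul, abs_of_pos (by positivity)]
    have : |pd b j ((n + 1 : ℝ)⁻¹ • x)| ≤ K := by
      refine ((fderiv ℝ b _).le_opNorm _).trans ?_
      simpa using hK _
    calc _ ≤ (n + 1 : ℝ)⁻¹ * K := by gcongr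
      _ = _ := by field_simp
  · intro n j x hx
    rw [key]
    have : (b : E2 → ℝ) =ᶠ[nhds ((n + 1 : ℝ)⁻¹ • x)] fun _ => 1 := by
      filter_upwards [Metric.isOpen_ball.mem_nhds (hlt n x hx)] with y hy
      exact b.one_of_mem_closedBall (Metric.ball_subset_closedBall hy)
    unfold pd; rw [this.fderiv_eq]; simp
  · intro n j x hx
    rw [key]
    have hx' : (n + 1 : ℝ)⁻¹ • x ∈ (Metric.closedBall (0 : E2) 2)ᶜ := by
      simp only [Set.mem_compl_iff, mem_closedBall_zero_iff, not_le]
      rw [hnorm, lt_div_iff₀ (by positivity)]; exact hx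
    have : (b : E2 → ℝ) =ᶠ[nhds ((n + 1 : ℝ)⁻¹ • x)] fun _ => 0 := by
      filter_upwards [Metric.isClosed_closedBall.isOpen_compl.mem_nhds hx'] with y hy
      apply b.zero_of_le_dist
      simp only [Set.mem_compl_iff, Metric.mem_closedBall, not_le] at hy
      exact hy.le
    unfold pd; rw [this.fderiv_eq]; simp

lemma tendsto_A {ψ : ℕ → E2 → ℝ} {K : ℝ}
    (hb : ∀ (n : ℕ) x, |ψ n x| ≤ K / (n + 1)) {f : E2 → ℝ} (hf : Integrable f) :
    Tendsto (fun n => ∫ x, ψ n x * f x) atTop (nhds 0) := by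
  have h1 : Tendsto (fun n : ℕ => K / ((n : ℝ) + 1) * ∫ x, |f x|) atTop (nhds 0) := by
    have := (tendsto_const_div_atTop_nhds_zero_nat K).comp (tendsto_add_atTop_nat 1)
    have h2 := this.mul_const (∫ x, |f x|)
    simpa [Function.comp_def] using h2
  refine squeeze_zero_norm (fun n => ?_) h1
  rw [← integral_const_mul]
  refine norm_integral_le_of_norm_le (hf.abs.const_mul _) (Eventually.of_forall fun x => ?_)
  rw [norm_mul, Real.norm_eq_abs, Real.norm_eq_abs]
  exact mul_le_mul_of_nonneg_right (hb n x) (abs_nonneg _)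

lemma tendsto_B {ψ : ℕ → E2 → ℝ} {K : ℝ} (hc : ∀ n, Continuous (ψ n))
    (hb : ∀ (n : ℕ) x, |ψ n x| ≤ K / (n + 1))
    (h0 : ∀ (n : ℕ) x, ‖x‖ < n + 1 → ψ n x = 0)
    (h2 : ∀ (n : ℕ) x, 2 * (n + 1) < ‖x‖ → ψ n x = 0)
    {f : E2 → ℝ} (hfc : Continuous f) (hf : Integrable fun x => f x ^ 2) :
    Tendsto (fun n => ∫ x, ψ n x * f x) atTop (nhds 0) := by
  have hpt : ∀ (n : ℕ) x, (((n : ℝ) + 1) * ψ n x) ^ 2 ≤ K ^ 2 := by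
    intro n x
    rw [← sq_abs, abs_mul, abs_of_pos (by positivity : (0:ℝ) < n + 1)]
    have := hb n x
    rw [le_div_iff₀ (by positivity)] at this
    gcongr; linarith
  have hbd : ∀ (n : ℕ) x, ‖(((n : ℝ) + 1) * ψ n x) ^ 2 * f x ^ 2‖ ≤ K ^ 2 * f x ^ 2 := by
    intro n x
    rw [Real.norm_of_nonneg (by positivity)]
    exact mul_le_mul_of_nonneg_right (hpt n x) (sq_nonneg _)
  have hmeas : ∀ n : ℕ, AEStronglyMeasurable
      (fun x => (((n : ℝ) + 1) * ψ n x) ^ 2 * f x ^ 2) volume := fun n => by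
    have := hc n
    exact Continuous.aestronglyMeasurable (by fun_prop)
  have hT : Tendsto (fun n : ℕ => ∫ x, (((n : ℝ) + 1) * ψ n x) ^ 2 * f x ^ 2) atTop (nhds 0) := by
    have := tendsto_integral_of_dominated_convergence (μ := volume)
      (F := fun (n : ℕ) x => (((n : ℝ) + 1) * ψ n x) ^ 2 * f x ^ 2) (f := fun _ => (0:ℝ))
      (fun x => K ^ 2 * f x ^ 2) hmeas (hf.const_mul _)
      (fun n => Eventually.of_forall (hbd n)) (Eventually.of_forall fun x => ?_)
    · simpa using this
    · refine tendsto_const_nhds.congr' ?_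
      obtain ⟨N, hN⟩ := exists_nat_gt ‖x‖
      filter_upwards [eventually_ge_atTop N] with n hn
      have : (N : ℝ) ≤ n := by exact_mod_cast hn
      rw [h0 n x (by linarith)]; simp
  have hint : ∀ n : ℕ, Integrable (fun x => (((n : ℝ) + 1) * ψ n x) ^ 2 * f x ^ 2) := fun n =>
    (hf.const_mul (K ^ 2)).mono' (hmeas n) (Eventually.of_forall (hbd n))
  have hball : ∀ (n : ℕ) (ε : ℝ), Integrable ((Metric.closedBall (0 : E2) (2 * (n + 1))).indicator
      fun _ => ε / ((n : ℝ) + 1) ^ 2) ∧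
      ∫ x, (Metric.closedBall (0 : E2) (2 * (n + 1))).indicator
      (fun _ => ε / ((n : ℝ) + 1) ^ 2) x = ε * (4 * π) := by
    intro n ε
    constructor
    · rw [integrable_indicator_iff Metric.isClosed_closedBall.measurableSet]
      exact integrableOn_const (by exact measure_closedBall_lt_top.ne)
    · rw [integral_indicator Metric.isClosed_closedBall.measurableSet, setIntegral_const,
        Measure.real, EuclideanSpace.volume_closedBall_fin_two]
      have : (0:ℝ) ≤ n + 1 := by positivity
      simp [ENNReal.toReal_ofReal this, ENNReal.toReal_ofReal Real.pi_pos.le]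
      field_simp
      ring
  have main : ∀ ε > 0, ∀ n : ℕ, ‖∫ x, ψ n x * f x‖ ≤
      ε * (4 * π) + ε⁻¹ * ∫ x, (((n : ℝ) + 1) * ψ n x) ^ 2 * f x ^ 2 := by
    intro ε hε n
    rw [← (hball n ε).2, ← integral_const_mul, ← integral_add (hball n ε).1 ((hint n).const_mul _)]
    refine norm_integral_le_of_norm_le ((hball n ε).1.add ((hint n).const_mul _))
      (Eventually.of_forall fun x => ?_)
    by_cases hx : x ∈ Metric.closedBall (0 : E2) (2 * (n + 1))
    · rw [Set.indicator_of_mem hx, Real.norm_eq_abs]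
      set m : ℝ := (n : ℝ) + 1
      have hm : 0 < m := by positivity
      have e : ε / m ^ 2 + ε⁻¹ * ((m * ψ n x) ^ 2 * f x ^ 2) =
        ε⁻¹ * ((ε / m) ^ 2 + (m * (ψ n x * f x)) ^ 2) := by field_simp
      have e2 : |ψ n x * f x| = ε⁻¹ * ((ε / m) * |m * (ψ n x * f x)|) := by
        rw [abs_mul m, abs_of_pos hm]; field_simp
      rw [e, e2]
      gcongr
      rw [← sq_abs (m * _)]
      nlinarith [sq_nonneg (ε / m - |m * (ψ n x * f x)|), sq_nonneg (ε/m), sq_nonneg |m * (ψ n x * f x)|]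
    · rw [Set.indicator_of_notMem hx]
      rw [mem_closedBall_zero_iff, not_le] at hx
      rw [h2 n x hx]; simp
  rw [Metric.tendsto_atTop]
  intro δ hδ
  have hπ := Real.pi_pos
  set ε := δ / (16 * π) with hεd
  have hε : 0 < ε := by positivity
  have h4 : ε * (4 * π) = δ / 4 := by rw [hεd]; field_simp; norm_num
  rw [Metric.tendsto_atTop] at hT
  obtain ⟨N, hN⟩ := hT (ε * (δ / 2)) (by positivity)
  refine ⟨N, fun n hn => ?_⟩
  have h5 := hN n hn
  rw [dist_zero_right] at h5 ⊢
  have h6 := main ε hε n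
  have h7 := (le_abs_self _).trans_lt h5
  have h8 : ε⁻¹ * ∫ x, (((n : ℝ) + 1) * ψ n x) ^ 2 * f x ^ 2 < ε⁻¹ * (ε * (δ / 2)) := by gcongr
  rw [inv_mul_cancel_left₀ hε.ne'] at h8
  linarith

lemma L4_of_H1 {f : E2 → ℝ} (hf : ContDiff ℝ (⊤ : ℕ∞) f) (h2 : Integrable fun x => f x ^ 2)
    (hg : Integrable fun x => pd f 0 x ^ 2 + pd f 1 x ^ 2) : Integrable fun x => f x ^ 4 := by
  obtain ⟨φ, K, hK, hφ, hφc, hφ0, hφ1, hφe, hφb, -, -⟩ := exists_cutoff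
  have hd : ∀ x, DifferentiableAt ℝ f x := hf.differentiable (by simp)
  have hdφ : ∀ n x, DifferentiableAt ℝ (φ n) x := fun n => (hφ n).differentiable (by simp)
  have hc : Continuous f := hf.continuous
  set G : E2 → ℝ := fun x => (2 * K + 2) * f x ^ 2 + (pd f 0 x ^ 2 + pd f 1 x ^ 2) with hG
  have hGi : Integrable G := (h2.const_mul _).add hg
  have hbound : ∀ n x, ‖fderiv ℝ (fun y => φ n y * (f y * f y)) x‖ ≤ G x := by
    intro n x
    have hj : ∀ j, |pd (fun y => φ n y * (f y * f y)) j x| ≤ (K + 1) * f x ^ 2 + pd f j x ^ 2 := by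
      intro j
      rw [pd_mul' (g := fun y => f y * f y) (hdφ n x) ((hd x).mul (hd x)), pd_mul' (hd x) (hd x)]
      have h1 : |pd (φ n) j x| ≤ K := (hφb n j x).trans (div_le_self hK (by
        have : (0:ℝ) ≤ n := by positivity
        linarith))
      have h3 : |pd (φ n) j x * (f x * f x)| ≤ K * f x ^ 2 := by
        rw [abs_mul, abs_mul_self, ← pow_two]; gcongr
      have h4 : |φ n x * (pd f j x * f x + f x * pd f j x)| ≤ f x ^ 2 + pd f j x ^ 2 := by
        rw [abs_mul, abs_of_nonneg (hφ0 n x)]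
        calc _ ≤ 1 * |pd f j x * f x + f x * pd f j x| := by gcongr; exact hφ1 n x
          _ ≤ _ := by
            rw [one_mul, abs_le]
            constructor <;> nlinarith [sq_nonneg (f x + pd f j x), sq_nonneg (f x - pd f j x)]
      exact (abs_add_le _ _).trans (by linarith)
    have := fderiv_norm_le (fun y => φ n y * (f y * f y)) x
    have a0 := hj 0
    have a1 := hj 1
    simp only [hG]
    linarith
  have hp : Real.HolderConjugate (Module.finrank ℝ E2) 2 := by
    simp only [finrank_euclideanSpace, Fintype.card_fin, Nat.cast_ofNat]
    exact Real.HolderConjugate.two_two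
  set C := lintegralPowLePowLIntegralFDerivConst (volume : Measure E2) 2
  set D := ∫⁻ x, ENNReal.ofReal (G x)
  have hD : D < ⊤ := hGi.lintegral_lt_top
  have hn : ∀ n, ∫⁻ x, ‖φ n x * (f x * f x)‖ₑ ^ (2:ℝ) ≤ C * D ^ (2:ℝ) := by
    intro n
    refine (lintegral_pow_le_pow_lintegral_fderiv volume
      (u := fun x => φ n x * (f x * f x)) ?_ ?_ hp).trans ?_
    · exact ((hφ n).mul (hf.mul hf)).of_le (by exact_mod_cast le_top)
    · exact (hφc n).mul_right
    · gcongr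
      refine lintegral_mono fun x => ?_
      rw [← ofReal_norm]
      exact ENNReal.ofReal_le_ofReal (hbound n x)
  have hlim : ∀ x, liminf (fun n => ‖φ n x * (f x * f x)‖ₑ ^ (2:ℝ)) atTop = ‖f x ^ 4‖ₑ := by
    intro x
    apply Tendsto.liminf_eq
    refine tendsto_const_nhds.congr' ?_
    obtain ⟨N, hN⟩ := exists_nat_gt ‖x‖
    filter_upwards [eventually_ge_atTop N] with n hn
    have : (N : ℝ) ≤ n := by exact_mod_cast hn
    rw [hφe n x (by linarith)]
    simp [enorm_mul, enorm_pow]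
    ring
  refine ⟨(hc.pow 4).aestronglyMeasurable, ?_⟩
  rw [hasFiniteIntegral_iff_enorm]
  calc ∫⁻ x, ‖f x ^ 4‖ₑ = ∫⁻ x, liminf (fun n => ‖φ n x * (f x * f x)‖ₑ ^ (2:ℝ)) atTop := by
        simp_rw [hlim]
    _ ≤ liminf (fun n => ∫⁻ x, ‖φ n x * (f x * f x)‖ₑ ^ (2:ℝ)) atTop := by
        apply lintegral_liminf_le
        intro n
        have := (hφ n).continuous
        exact ((by fun_prop : Continuous fun x => φ n x * (f x * f x)).enorm.measurable).pow_const _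
    _ ≤ liminf (fun n : ℕ => (C * D ^ (2:ℝ) : ENNReal)) atTop := by
        refine liminf_le_liminf ?_
        exact Eventually.of_forall hn
    _ = C * D ^ (2:ℝ) := by simp
    _ < ⊤ := by
        apply ENNReal.mul_lt_top (by simp)
        exact ENNReal.rpow_lt_top_of_nonneg (by norm_num) hD.ne

lemma ibp {φ F : E2 → ℝ} (hφ : ContDiff ℝ 1 φ) (hc : HasCompactSupport φ) (hF : ContDiff ℝ 1 F)
    (j : Fin 2) : Integrable (fun x => φ x * pd F j x) ∧
      ∫ x, φ x * pd F j x = - ∫ x, pd φ j x * F x := by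
  have hcd : HasCompactSupport (pd φ j) := hc.fderiv_apply ℝ _
  have i1 : Integrable (fun x => φ x * pd F j x) :=
    (hφ.continuous.mul (pd_continuous hF j)).integrable_of_hasCompactSupport hc.mul_right
  refine ⟨i1, integral_mul_fderiv_eq_neg_fderiv_mul_of_integrable ?_ i1 ?_ ?_ ?_⟩
  · exact ((pd_continuous hφ j).mul hF.continuous).integrable_of_hasCompactSupport hcd.mul_right
  · exact (hφ.continuous.mul hF.continuous).integrable_of_hasCompactSupport hc.mul_right
  · exact fun x _ => hφ.differentiable (by simp) x
  · exact fun x _ => hF.differentiable (by simp) x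

/-- The energy flux is divergence-form for the dissipation. -/
lemma energy_id (μ lam a γ : ℝ) (hγ : 1 < γ)
    (ρ u0 u1 : E2 → ℝ)
    (hρ : ContDiff ℝ (⊤ : ℕ∞) ρ) (h0 : ContDiff ℝ (⊤ : ℕ∞) u0) (h1 : ContDiff ℝ (⊤ : ℕ∞) u1)
    (hρnn : ∀ x, 0 ≤ ρ x)
    (hcont : ∀ x, pd (fun y => ρ y * u0 y) 0 x + pd (fun y => ρ y * u1 y) 1 x = 0)
    (d : E2 → ℝ) (hd : d = fun x => pd u0 0 x + pd u1 1 x)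
    (hm0 : ∀ x, pd (fun y => ρ y * u0 y * u0 y) 0 x + pd (fun y => ρ y * u1 y * u0 y) 1 x =
      - pd (fun y => a * ρ y ^ γ) 0 x + μ * (pd (pd u0 0) 0 x + pd (pd u0 1) 1 x)
        + (μ + lam) * pd d 0 x)
    (hm1 : ∀ x, pd (fun y => ρ y * u0 y * u1 y) 0 x + pd (fun y => ρ y * u1 y * u1 y) 1 x =
      - pd (fun y => a * ρ y ^ γ) 1 x + μ * (pd (pd u1 0) 0 x + pd (pd u1 1) 1 x)
        + (μ + lam) * pd d 1 x)
    (A B : Fin 2 → E2 → ℝ)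
    (hA0 : A 0 = fun x => μ * (u0 x * pd u0 0 x + u1 x * pd u1 0 x) + (μ + lam) * (u0 x * d x)
      - (1 / 2) * ((ρ x * u0 x) * (u0 x * u0 x + u1 x * u1 x)))
    (hA1 : A 1 = fun x => μ * (u0 x * pd u0 1 x + u1 x * pd u1 1 x) + (μ + lam) * (u1 x * d x)
      - (1 / 2) * ((ρ x * u1 x) * (u0 x * u0 x + u1 x * u1 x)))
    (hB0 : B 0 = fun x => (a * γ / (γ - 1)) * (ρ x ^ γ * u0 x))
    (hB1 : B 1 = fun x => (a * γ / (γ - 1)) * (ρ x ^ γ * u1 x)) :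
    (∀ j, ContDiff ℝ 1 (A j)) ∧ (∀ j, ContDiff ℝ 1 (B j)) ∧
    ∀ x, pd (A 0) 0 x + pd (A 1) 1 x - (pd (B 0) 0 x + pd (B 1) 1 x) =
      μ * (pd u0 0 x ^ 2 + pd u0 1 x ^ 2 + pd u1 0 x ^ 2 + pd u1 1 x ^ 2)
        + (μ + lam) * d x ^ 2 := by
  have hP : ContDiff ℝ 1 (fun x => ρ x ^ γ) :=
    (hρ.of_le (by exact_mod_cast le_top)).rpow_const_of_le (m := 1) (by simpa using hγ.le)
  have le1 : ((1 : ℕ∞) : WithTop ℕ∞) ≤ ((⊤ : ℕ∞) : WithTop ℕ∞) := by exact_mod_cast le_top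
  have cρ : ContDiff ℝ 1 ρ := hρ.of_le le1
  have c0 : ContDiff ℝ 1 u0 := h0.of_le le1
  have c1 : ContDiff ℝ 1 u1 := h1.of_le le1
  have c00 : ContDiff ℝ 1 (pd u0 0) := (pd_contDiff h0 0).of_le le1
  have c01 : ContDiff ℝ 1 (pd u0 1) := (pd_contDiff h0 1).of_le le1
  have c10 : ContDiff ℝ 1 (pd u1 0) := (pd_contDiff h1 0).of_le le1
  have c11 : ContDiff ℝ 1 (pd u1 1) := (pd_contDiff h1 1).of_le le1
  have cd : ContDiff ℝ 1 d := by rw [hd]; exact c00.add c11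
  refine ⟨?_, ?_, ?_⟩
  · intro j; fin_cases j
    · change ContDiff ℝ 1 (A 0); rw [hA0]; fun_prop
    · change ContDiff ℝ 1 (A 1); rw [hA1]; fun_prop
  · intro j; fin_cases j
    · change ContDiff ℝ 1 (B 0); rw [hB0]; exact contDiff_const.mul (hP.mul c0)
    · change ContDiff ℝ 1 (B 1); rw [hB1]; exact contDiff_const.mul (hP.mul c1)
  intro x
  have ne : (1 : WithTop ℕ∞) ≠ 0 := by simp
  have dP : DifferentiableAt ℝ (fun x => ρ x ^ γ) x := hP.differentiable ne x
  have dρ : DifferentiableAt ℝ ρ x := cρ.differentiable ne x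
  have d0 : DifferentiableAt ℝ u0 x := c0.differentiable ne x
  have d1 : DifferentiableAt ℝ u1 x := c1.differentiable ne x
  have d00 : DifferentiableAt ℝ (pd u0 0) x := c00.differentiable ne x
  have d01 : DifferentiableAt ℝ (pd u0 1) x := c01.differentiable ne x
  have d10 : DifferentiableAt ℝ (pd u1 0) x := c10.differentiable ne x
  have d11 : DifferentiableAt ℝ (pd u1 1) x := c11.differentiable ne x
  have dd : DifferentiableAt ℝ d x := cd.differentiable ne x
  have eA0 : pd (A 0) 0 x = μ * (pd u0 0 x * pd u0 0 x + u0 x * pd (pd u0 0) 0 x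
      + (pd u1 0 x * pd u1 0 x + u1 x * pd (pd u1 0) 0 x))
      + (μ + lam) * (pd u0 0 x * d x + u0 x * pd d 0 x)
      - (1 / 2) * (pd (fun y => ρ y * u0 y) 0 x * (u0 x * u0 x + u1 x * u1 x) + ρ x * u0 x *
        ((pd u0 0 x * u0 x + u0 x * pd u0 0 x) + (pd u1 0 x * u1 x + u1 x * pd u1 0 x))) := by
    rw [hA0]
    rw [pd_sub' (by fun_prop) (by fun_prop), pd_add' (by fun_prop) (by fun_prop),
      pd_cmul _ (by fun_prop), pd_cmul _ (by fun_prop), pd_cmul _ (by fun_prop),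
      pd_add' (by fun_prop) (by fun_prop), pd_mul' d0 d00, pd_mul' d1 d10, pd_mul' d0 dd,
      pd_mul' (by fun_prop) (by fun_prop), pd_add' (by fun_prop) (by fun_prop), pd_mul' d0 d0,
      pd_mul' d1 d1]
  have eA1 : pd (A 1) 1 x = μ * (pd u0 1 x * pd u0 1 x + u0 x * pd (pd u0 1) 1 x
      + (pd u1 1 x * pd u1 1 x + u1 x * pd (pd u1 1) 1 x))
      + (μ + lam) * (pd u1 1 x * d x + u1 x * pd d 1 x)
      - (1 / 2) * (pd (fun y => ρ y * u1 y) 1 x * (u0 x * u0 x + u1 x * u1 x) + ρ x * u1 x *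
        ((pd u0 1 x * u0 x + u0 x * pd u0 1 x) + (pd u1 1 x * u1 x + u1 x * pd u1 1 x))) := by
    rw [hA1]
    rw [pd_sub' (by fun_prop) (by fun_prop), pd_add' (by fun_prop) (by fun_prop),
      pd_cmul _ (by fun_prop), pd_cmul _ (by fun_prop), pd_cmul _ (by fun_prop),
      pd_add' (by fun_prop) (by fun_prop), pd_mul' d0 d01, pd_mul' d1 d11, pd_mul' d1 dd,
      pd_mul' (by fun_prop) (by fun_prop), pd_add' (by fun_prop) (by fun_prop), pd_mul' d0 d0,
      pd_mul' d1 d1]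
  have dPj : ∀ j, pd (fun y => ρ y ^ γ) j x = γ * ρ x ^ (γ - 1) * pd ρ j x := fun j =>
    pd_rpow hγ.le dρ
  have eB0 : pd (B 0) 0 x = (a * γ / (γ - 1)) *
      (γ * ρ x ^ (γ - 1) * pd ρ 0 x * u0 x + ρ x ^ γ * pd u0 0 x) := by
    rw [hB0, pd_cmul (g := fun y => ρ y ^ γ * u0 y) _ (dP.mul d0), pd_mul' dP d0, dPj]
  have eB1 : pd (B 1) 1 x = (a * γ / (γ - 1)) *
      (γ * ρ x ^ (γ - 1) * pd ρ 1 x * u1 x + ρ x ^ γ * pd u1 1 x) := by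
    rw [hB1, pd_cmul (g := fun y => ρ y ^ γ * u1 y) _ (dP.mul d1), pd_mul' dP d1, dPj]
  have hpow : ρ x ^ γ = ρ x ^ (γ - 1) * ρ x := by
    conv_lhs => rw [show γ = (γ - 1) + 1 by ring]
    rw [Real.rpow_add_of_nonneg (hρnn x) (by linarith) (by norm_num), Real.rpow_one]
  have m0 := hm0 x
  have m1 := hm1 x
  have hc := hcont x
  rw [pd_mul' (f := fun y => ρ y * u0 y) (by fun_prop) d0,
    pd_mul' (f := fun y => ρ y * u1 y) (by fun_prop) d0, pd_cmul _ dP, dPj] at m0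
  rw [pd_mul' (f := fun y => ρ y * u0 y) (by fun_prop) d1,
    pd_mul' (f := fun y => ρ y * u1 y) (by fun_prop) d1, pd_cmul _ dP, dPj] at m1
  have hc' := hc
  rw [pd_mul' dρ d0, pd_mul' dρ d1] at hc'
  have hB : pd (B 0) 0 x + pd (B 1) 1 x =
      a * (γ * ρ x ^ (γ - 1) * pd ρ 0 x) * u0 x + a * (γ * ρ x ^ (γ - 1) * pd ρ 1 x) * u1 x := by
    rw [eB0, eB1, hpow]
    have hne : γ - 1 ≠ 0 := by linarith
    field_simp
    linear_combination (a * ρ x ^ (γ - 1)) * hc'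
  have hdx : d x = pd u0 0 x + pd u1 1 x := by rw [hd]
  rw [hB, eA0, eA1]
  generalize pd (fun y => ρ y * u0 y) 0 x = Q0 at *
  generalize pd (fun y => ρ y * u1 y) 1 x = Q1 at *
  rw [hdx]
  linear_combination (-u0 x) * m0 - u1 x * m1 + (1 / 2) * (u0 x * u0 x + u1 x * u1 x) * hc

lemma int_mul_sq {f g : E2 → ℝ} (hf : Continuous f) (hg : Continuous g)
    (h1 : Integrable fun x => f x ^ 2) (h2 : Integrable fun x => g x ^ 2) :
    Integrable fun x => f x * g x := by
  refine (h1.add h2).mono' (hf.mul hg).aestronglyMeasurable (Eventually.of_forall fun x => ?_)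
  rw [Real.norm_eq_abs, abs_le]
  simp only [Pi.add_apply]
  constructor <;> nlinarith [sq_nonneg (f x + g x), sq_nonneg (f x - g x)]

lemma int_of_le {f g : E2 → ℝ} (hf : Continuous f) (hg : Integrable g)
    (h0 : ∀ x, 0 ≤ f x) (h : ∀ x, f x ≤ g x) : Integrable f :=
  hg.mono' hf.aestronglyMeasurable (Eventually.of_forall fun x => by
    rw [Real.norm_of_nonneg (h0 x)]; exact h x)

lemma grad_zero (μ lam a γ : ℝ) (hμ : 0 < μ) (hlam : 0 < lam + μ) (hγ : 1 < γ)
    (ρ u0 u1 : E2 → ℝ)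
    (hρ : ContDiff ℝ (⊤ : ℕ∞) ρ) (h0 : ContDiff ℝ (⊤ : ℕ∞) u0) (h1 : ContDiff ℝ (⊤ : ℕ∞) u1)
    (hρnn : ∀ x, 0 ≤ ρ x) (M : ℝ) (hM : ∀ x, |ρ x| ≤ M)
    (hcont : ∀ x, pd (fun y => ρ y * u0 y) 0 x + pd (fun y => ρ y * u1 y) 1 x = 0)
    (d : E2 → ℝ) (hd : d = fun x => pd u0 0 x + pd u1 1 x)
    (hm0 : ∀ x, pd (fun y => ρ y * u0 y * u0 y) 0 x + pd (fun y => ρ y * u1 y * u0 y) 1 x =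
      - pd (fun y => a * ρ y ^ γ) 0 x + μ * (pd (pd u0 0) 0 x + pd (pd u0 1) 1 x)
        + (μ + lam) * pd d 0 x)
    (hm1 : ∀ x, pd (fun y => ρ y * u0 y * u1 y) 0 x + pd (fun y => ρ y * u1 y * u1 y) 1 x =
      - pd (fun y => a * ρ y ^ γ) 1 x + μ * (pd (pd u1 0) 0 x + pd (pd u1 1) 1 x)
        + (μ + lam) * pd d 1 x)
    (i0 : Integrable fun x => u0 x ^ 2) (i1 : Integrable fun x => u1 x ^ 2)
    (ig : Integrable fun x => pd u0 0 x ^ 2 + pd u0 1 x ^ 2 + pd u1 0 x ^ 2 + pd u1 1 x ^ 2) :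
    ∀ x, pd u0 0 x ^ 2 + pd u0 1 x ^ 2 + pd u1 0 x ^ 2 + pd u1 1 x ^ 2 = 0 := by
  obtain ⟨φ, K, hK, hφ, hφc, hφ0, hφ1, hφe, hφb, hφz, hφf⟩ := exists_cutoff
  obtain ⟨cA, cB, hid⟩ := energy_id μ lam a γ hγ ρ u0 u1 hρ h0 h1 hρnn hcont d hd hm0 hm1
    ![fun x => μ * (u0 x * pd u0 0 x + u1 x * pd u1 0 x) + (μ + lam) * (u0 x * d x)
      - (1 / 2) * ((ρ x * u0 x) * (u0 x * u0 x + u1 x * u1 x)),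
      fun x => μ * (u0 x * pd u0 1 x + u1 x * pd u1 1 x) + (μ + lam) * (u1 x * d x)
      - (1 / 2) * ((ρ x * u1 x) * (u0 x * u0 x + u1 x * u1 x))]
    ![fun x => (a * γ / (γ - 1)) * (ρ x ^ γ * u0 x),
      fun x => (a * γ / (γ - 1)) * (ρ x ^ γ * u1 x)] rfl rfl rfl rfl
  set A : Fin 2 → E2 → ℝ :=
    ![fun x => μ * (u0 x * pd u0 0 x + u1 x * pd u1 0 x) + (μ + lam) * (u0 x * d x)
      - (1 / 2) * ((ρ x * u0 x) * (u0 x * u0 x + u1 x * u1 x)),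
      fun x => μ * (u0 x * pd u0 1 x + u1 x * pd u1 1 x) + (μ + lam) * (u1 x * d x)
      - (1 / 2) * ((ρ x * u1 x) * (u0 x * u0 x + u1 x * u1 x))] with hA
  set B : Fin 2 → E2 → ℝ := ![fun x => (a * γ / (γ - 1)) * (ρ x ^ γ * u0 x),
      fun x => (a * γ / (γ - 1)) * (ρ x ^ γ * u1 x)] with hB
  have le1 : ((1 : ℕ∞) : WithTop ℕ∞) ≤ ((⊤ : ℕ∞) : WithTop ℕ∞) := by exact_mod_cast le_top
  have kρ := hρ.continuous
  have k0 := h0.continuous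
  have k1 := h1.continuous
  have k00 := (pd_contDiff h0 0).continuous
  have k01 := (pd_contDiff h0 1).continuous
  have k10 := (pd_contDiff h1 0).continuous
  have k11 := (pd_contDiff h1 1).continuous
  have kd : Continuous d := by rw [hd]; exact k00.add k11
  have i00 : Integrable fun x => pd u0 0 x ^ 2 := int_of_le (by fun_prop) ig
    (fun x => by positivity)
    (fun x => by nlinarith [sq_nonneg (pd u0 1 x), sq_nonneg (pd u1 0 x), sq_nonneg (pd u1 1 x)])
  have i01 : Integrable fun x => pd u0 1 x ^ 2 := int_of_le (by fun_prop) ig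
    (fun x => by positivity)
    (fun x => by nlinarith [sq_nonneg (pd u0 0 x), sq_nonneg (pd u1 0 x), sq_nonneg (pd u1 1 x)])
  have i10 : Integrable fun x => pd u1 0 x ^ 2 := int_of_le (by fun_prop) ig
    (fun x => by positivity)
    (fun x => by nlinarith [sq_nonneg (pd u0 1 x), sq_nonneg (pd u0 0 x), sq_nonneg (pd u1 1 x)])
  have i11 : Integrable fun x => pd u1 1 x ^ 2 := int_of_le (by fun_prop) ig
    (fun x => by positivity)
    (fun x => by nlinarith [sq_nonneg (pd u0 1 x), sq_nonneg (pd u1 0 x), sq_nonneg (pd u0 0 x)])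
  have id2 : Integrable fun x => d x ^ 2 := int_of_le (by fun_prop) (ig.const_mul 2)
    (fun x => by positivity)
    (fun x => by
      simp only [hd]
      nlinarith [sq_nonneg (pd u0 1 x), sq_nonneg (pd u1 0 x), sq_nonneg (pd u0 0 x - pd u1 1 x)])
  have j0 : Integrable fun x => u0 x ^ 4 := L4_of_H1 h0 i0 (i00.add i01)
  have j1 : Integrable fun x => u1 x ^ 4 := L4_of_H1 h1 i1 (i10.add i11)
  have jq : Integrable fun x => (u0 x * u0 x + u1 x * u1 x) ^ 2 :=
    int_of_le (by fun_prop) ((j0.const_mul 2).add (j1.const_mul 2)) (fun x => by positivity)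
      (fun x => by simp only [Pi.add_apply]; nlinarith [sq_nonneg (u0 x ^ 2 - u1 x ^ 2)])
  have hM0 : 0 ≤ M := (abs_nonneg _).trans (hM 0)
  have hM' : ∀ x, ρ x ≤ M := fun x => (le_abs_self _).trans (hM x)
  have r0 : Integrable fun x => (ρ x * u0 x) ^ 2 :=
    int_of_le (by fun_prop) (i0.const_mul (M ^ 2)) (fun x => by positivity) (fun x => by
      rw [mul_pow]; have := hM' x; have := hρnn x; gcongr)
  have r1 : Integrable fun x => (ρ x * u1 x) ^ 2 :=
    int_of_le (by fun_prop) (i1.const_mul (M ^ 2)) (fun x => by positivity) (fun x => by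
      rw [mul_pow]; have := hM' x; have := hρnn x; gcongr)
  have iA : ∀ j, Integrable (A j) := by
    intro j; fin_cases j
    · exact ((((int_mul_sq k0 k00 i0 i00).add (int_mul_sq k1 k10 i1 i10)).const_mul μ).add
        ((int_mul_sq k0 kd i0 id2).const_mul (μ + lam))).sub
        ((int_mul_sq (kρ.mul k0) (by fun_prop) r0 jq).const_mul (1 / 2))
    · exact ((((int_mul_sq k0 k01 i0 i01).add (int_mul_sq k1 k11 i1 i11)).const_mul μ).add
        ((int_mul_sq k1 kd i1 id2).const_mul (μ + lam))).sub
        ((int_mul_sq (kρ.mul k1) (by fun_prop) r1 jq).const_mul (1 / 2))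
  have hPM : ∀ x, (ρ x ^ γ) ^ 2 ≤ (M ^ γ) ^ 2 := fun x => by
    have := hM' x; have := hρnn x
    gcongr
  have iB : ∀ j, Integrable (fun x => B j x ^ 2) := by
    intro j
    have hc := (cB j).continuous.pow 2
    fin_cases j
    · refine int_of_le hc (i0.const_mul ((a * γ / (γ - 1)) ^ 2 * (M ^ γ) ^ 2))
        (fun x => sq_nonneg _) (fun x => ?_)
      change ((a * γ / (γ - 1)) * (ρ x ^ γ * u0 x)) ^ 2 ≤ _
      rw [mul_pow, mul_pow, mul_assoc]
      have := hPM x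
      gcongr
    · refine int_of_le hc (i1.const_mul ((a * γ / (γ - 1)) ^ 2 * (M ^ γ) ^ 2))
        (fun x => sq_nonneg _) (fun x => ?_)
      change ((a * γ / (γ - 1)) * (ρ x ^ γ * u1 x)) ^ 2 ≤ _
      rw [mul_pow, mul_pow, mul_assoc]
      have := hPM x
      gcongr
  have tA : ∀ j, Tendsto (fun n => ∫ x, pd (φ n) j x * A j x) atTop (nhds 0) := fun j =>
    tendsto_A (fun n x => hφb n j x) (iA j)
  have tB : ∀ j, Tendsto (fun n => ∫ x, pd (φ n) j x * B j x) atTop (nhds 0) := fun j =>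
    tendsto_B (fun n => (pd_contDiff (hφ n) j).continuous) (fun n x => hφb n j x)
      (fun n x => hφz n j x) (fun n x => hφf n j x) (cB j).continuous (iB j)
  set g : E2 → ℝ := fun x => pd u0 0 x ^ 2 + pd u0 1 x ^ 2 + pd u1 0 x ^ 2 + pd u1 1 x ^ 2 with hg
  set G : E2 → ℝ := fun x => μ * g x + (μ + lam) * d x ^ 2 with hG
  have hGi : Integrable G := (ig.const_mul μ).add (id2.const_mul (μ + lam))
  have hg0 : ∀ x, 0 ≤ g x := fun x => by simp only [hg]; positivity
  have hGg : ∀ x, μ * g x ≤ G x := fun x => by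
    simp only [hG]
    nlinarith [mul_nonneg hlam.le (sq_nonneg (d x))]
  have hG0 : ∀ x, 0 ≤ G x := fun x => (mul_nonneg hμ.le (hg0 x)).trans (hGg x)
  have kg : Continuous g := by fun_prop
  have kG : Continuous G := by fun_prop
  have hint : ∀ n, ∫ x, φ n x * G x = (-(∫ x, pd (φ n) 0 x * A 0 x) - ∫ x, pd (φ n) 1 x * A 1 x)
      + ((∫ x, pd (φ n) 0 x * B 0 x) + ∫ x, pd (φ n) 1 x * B 1 x) := by
    intro n
    have c := (hφ n).of_le le1
    obtain ⟨a1, a2⟩ := ibp c (hφc n) (cA 0) 0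
    obtain ⟨b1, b2⟩ := ibp c (hφc n) (cA 1) 1
    obtain ⟨c1, c2⟩ := ibp c (hφc n) (cB 0) 0
    obtain ⟨d1, d2⟩ := ibp c (hφc n) (cB 1) 1
    have e : (fun x => φ n x * G x) = fun x => (φ n x * pd (A 0) 0 x + φ n x * pd (A 1) 1 x)
        - (φ n x * pd (B 0) 0 x + φ n x * pd (B 1) 1 x) := by
      funext x
      have := hid x
      simp only [hG, hg]
      rw [← this]; ring
    have ab : Integrable (fun x => φ n x * pd (A 0) 0 x + φ n x * pd (A 1) 1 x) := a1.add b1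
    have cd : Integrable (fun x => φ n x * pd (B 0) 0 x + φ n x * pd (B 1) 1 x) := c1.add d1
    rw [e, integral_sub ab cd, integral_add a1 b1, integral_add c1 d1,
      a2, b2, c2, d2]
    ring
  have t0 : Tendsto (fun n => ∫ x, φ n x * G x) atTop (nhds 0) := by
    simp_rw [hint]
    have := ((tA 0).neg.sub (tA 1)).add ((tB 0).add (tB 1))
    simpa using this
  have t1 : Tendsto (fun n => ∫ x, φ n x * G x) atTop (nhds (∫ x, G x)) := by
    refine tendsto_integral_of_dominated_convergence G
      (fun n => ((hφ n).continuous.mul kG).aestronglyMeasurable) hGi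
      (fun n => Eventually.of_forall fun x => ?_) (Eventually.of_forall fun x => ?_)
    · rw [Real.norm_of_nonneg (mul_nonneg (hφ0 n x) (hG0 x))]
      exact mul_le_of_le_one_left (hG0 x) (hφ1 n x)
    · refine tendsto_const_nhds.congr' ?_
      obtain ⟨N, hN⟩ := exists_nat_gt ‖x‖
      filter_upwards [eventually_ge_atTop N] with n hn
      have : (N : ℝ) ≤ n := by exact_mod_cast hn
      rw [hφe n x (by linarith), one_mul]
  have hz : ∫ x, G x = 0 := tendsto_nhds_unique t1 t0
  have hae := (integral_eq_zero_iff_of_nonneg hG0 hGi).1 hz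
  have heq : G = 0 := (Continuous.ae_eq_iff_eq volume kG continuous_const).1 hae
  intro x
  have hx : G x = 0 := congrFun heq x
  have := hGg x
  have h3 := hg0 x
  have : μ * g x = 0 := le_antisymm (by linarith) (by positivity)
  exact (mul_eq_zero.1 this).resolve_left hμ.ne'

lemma const_of_pd {f : E2 → ℝ} (hf : Differentiable ℝ f) (h0 : ∀ x, pd f 0 x = 0)
    (h1 : ∀ x, pd f 1 x = 0) (x y : E2) : f x = f y := by
  refine is_const_of_fderiv_eq_zero (𝕜 := ℝ) hf (fun x => ?_) x y
  ext h
  rw [fderiv_apply_eq, h0, h1]; simp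

/-- Liouville type theorem for the 2D stationary compressible Navier–Stokes
system with `v ∈ H¹(ℝ²)`. -/
theorem liouville_NS_2D
    (μ lam a γ : ℝ)
    (hμ : 0 < μ) (hlam : 0 < lam + μ) (ha : 0 < a) (hγ : 1 < γ)
    (ρ : EuclideanSpace ℝ (Fin 2) → ℝ)
    (v : EuclideanSpace ℝ (Fin 2) → EuclideanSpace ℝ (Fin 2))
    (hρsm : ContDiff ℝ (⊤ : ℕ∞) ρ) (hvsm : ContDiff ℝ (⊤ : ℕ∞) v)
    (hρnn : ∀ x, 0 ≤ ρ x)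
    -- continuity equation: div(ρ v) = 0
    (hcont : ∀ x, ∑ j, pd (fun y => ρ y * v y j) j x = 0)
    -- momentum equation: div(ρ v ⊗ v) = -∇p + μ Δv + (μ+λ) ∇ div v,  p = a ρ^γ
    (hmom : ∀ x, ∀ i : Fin 2,
      ∑ j, pd (fun y => ρ y * v y j * v y i) j x =
        - pd (fun y => a * ρ y ^ γ) i x
          + μ * lap (fun y => v y i) x + (μ + lam) * pd (divV v) i x)
    -- ρ ∈ L^∞
    (hρb : ∃ M, ∀ x, |ρ x| ≤ M)
    -- v ∈ L²(ℝ²)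
    (hvL2 : Integrable (fun x => ‖v x‖ ^ 2))
    -- ∇v ∈ L²(ℝ²)
    (hgrad : Integrable (fun x => ∑ i, ∑ j, (pd (fun y => v y i) j x) ^ 2)) :
    (∀ x, v x = 0) ∧ (∃ c : ℝ, ∀ x, ρ x = c) := by
  obtain ⟨M, hM⟩ := hρb
  have hi : ∀ i, ContDiff ℝ (⊤ : ℕ∞) (fun y => v y i) := fun i => by fun_prop
  have hn : ∀ x, ‖v x‖ ^ 2 = v x 0 ^ 2 + v x 1 ^ 2 := fun x => by
    rw [EuclideanSpace.norm_sq_eq]; simp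
  simp only [hn] at hvL2
  simp only [Fin.sum_univ_two] at hcont hmom hgrad
  have k0 := (hi 0).continuous
  have k1 := (hi 1).continuous
  have i0 : Integrable fun x => v x 0 ^ 2 := int_of_le (by fun_prop) hvL2
    (fun x => by positivity) (fun x => by nlinarith [sq_nonneg (v x 1)])
  have i1 : Integrable fun x => v x 1 ^ 2 := int_of_le (by fun_prop) hvL2
    (fun x => by positivity) (fun x => by nlinarith [sq_nonneg (v x 0)])
  have hg := grad_zero μ lam a γ hμ hlam hγ ρ (fun y => v y 0) (fun y => v y 1) hρsm (hi 0) (hi 1)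
    hρnn M hM hcont (divV v) (by funext x; simp [divV, Fin.sum_univ_two])
    (fun x => by have := hmom x 0; simpa only [lap, Fin.sum_univ_two] using this)
    (fun x => by have := hmom x 1; simpa only [lap, Fin.sum_univ_two] using this)
    i0 i1 (by simpa only [add_assoc] using hgrad)
  have hp : ∀ i j x, pd (fun y => v y i) j x = 0 := by
    intro i j x
    have h := hg x
    have a1 := sq_nonneg (pd (fun y => v y 0) 0 x)
    have a2 := sq_nonneg (pd (fun y => v y 0) 1 x)
    have a3 := sq_nonneg (pd (fun y => v y 1) 0 x)
    have a4 := sq_nonneg (pd (fun y => v y 1) 1 x)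
    apply pow_eq_zero_iff (two_ne_zero) |>.1
    fin_cases i <;> fin_cases j <;> simp only [Fin.zero_eta, Fin.mk_one] <;> linarith
  have hz : ∀ i x, v x i = 0 := by
    intro i x
    have hc : ∀ y, v y i = v x i := fun y =>
      const_of_pd ((hi i).differentiable (by simp)) (hp i 0) (hp i 1) y x
    have hI : Integrable fun y : E2 => v y i ^ 2 := by fin_cases i <;> assumption
    simp only [hc] at hI
    rw [integrable_const_iff] at hI
    rcases hI with h | h
    · simpa using h
    · exfalso
      have := h.measure_univ_lt_top
      simp at this
  have hv : ∀ x, v x = 0 := fun x => by ext i; simpa using hz i x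
  refine ⟨hv, ρ 0, fun x => ?_⟩
  have hP : ContDiff ℝ 1 (fun x => a * ρ x ^ γ) := contDiff_const.mul
    ((hρsm.of_le (by exact_mod_cast le_top)).rpow_const_of_le (m := 1) (by simpa using hγ.le))
  have hpd : ∀ i x, pd (fun y => a * ρ y ^ γ) i x = 0 := by
    intro i x
    have hc0 : ∀ j (c : ℝ), pd (fun _ => c) j = fun _ => 0 := fun j c => by
      funext y; simp [pd]
    have := hmom x i
    have hd : divV v = fun _ => 0 := by funext y; simp [divV, hp]
    simp only [lap, hz, hd, hc0, mul_zero] at this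
    simpa using this
  have h := const_of_pd (hP.differentiable (by simp)) (hpd 0) (hpd 1) x 0
  have h' := mul_left_cancel₀ ha.ne' h
  exact (Real.rpow_left_inj (hρnn x) (hρnn 0) (by linarith)).1 h'
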